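/- There exists ε > 0 such that for every real c with 0 ≤ c ≤ 1/2 and every C₅-free graph G with n > 1 vertices, there exist disjoint nonempty subsets A, B ⊆ V(G) with |A| ≥ εcn and |B| ≥ εn such that the edge-density between A and B is either at most c or at least 1 − c. -/

import Mathlib

open SimpleGraph
open scoped Classical

/-- `G` is `C₅`-free: no induced subgraph of `G` is isomorphic to the 5-cycle. -/
def C5Free {V : Type} (G : SimpleGraph V) : Prop :=
  ¬ Nonempty (cycleGraph 5 ↪g G)

/-
Call a pair of sets sparse if each vertex of the first has few neighbours in the second. Suppose
that no pair with the required sizes is sparse in `G` or in `Gᶜ`. Since the greedy embedding of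
`C₅`, one vertex at a time, must fail, every large set contains a pair of linear size that is sparse
to within `1/64` in `G` or in `Gᶜ`. Applying this three times, two of the three pairs are sparse in
the same graph `F`, and this gives sets `P`, `Q₁`, `Q₂`, pairwise sparse in `F`. As `C₅` is
self-complementary, `F` is `C₅`-free.

Some `v ∈ P` has a large neighbourhood inside `P`, and this neighbourhood covers almost all of `Q₁`.
A minimal `A ⊆ N(v)` covering a quarter of `Q₁` or of `Q₂`, say of `Q₁`, leaves half of `Q₂`
uncovered. A vertex `s ∈ N(v)` with many neighbours `w` in the uncovered part of `Q₂` then yields a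
`C₅`: take a covered `d ∈ Q₁` and `a ∈ A` with `a ~ d`. If `a ≁ s`, find an edge `w d` and use
`v a d w s`; if `a ~ s`, find a path `s w x d` with `x ∈ Q₂` uncovered and use `x w s a d`.
Sparseness supplies the non-adjacencies that do not come from the choice of these vertices.
-/

section

open Finset Function

universe u

variable {V : Type u} {G : SimpleGraph V}

/-- The neighbours of `v` that lie in `B`. -/
noncomputable def nbrsIn (G : SimpleGraph V) (v : V) (B : Finset V) : Finset V :=
  {x ∈ B | G.Adj v x}

/-- One-sided sparseness: each vertex of `A` is adjacent to at most a proportion `γ` of `B`. -/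
def SparseTo (G : SimpleGraph V) (γ : ℝ) (A B : Finset V) : Prop :=
  ∀ a ∈ A, (#(nbrsIn G a B) : ℝ) ≤ γ * #B

/-- The vertices of `Q` covered by `A`, that is, those with a neighbour in `A`. -/
noncomputable def coverIn (G : SimpleGraph V) (A Q : Finset V) : Finset V :=
  A.biUnion fun a => nbrsIn G a Q

/-- The negation of the desired conclusion for `G`, in the form in which it is used: no disjoint
`A`, `B` with `|A| ≥ cβ` and `|B| ≥ β` are `c`-sparse. -/
def NoSparsePair (G : SimpleGraph V) (c β : ℝ) : Prop :=
  ∀ ⦃A B : Finset V⦄, Disjoint A B → c * β ≤ #A → β ≤ #B → ¬ SparseTo G c A B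

theorem mem_nbrsIn {v x : V} {B : Finset V} : x ∈ nbrsIn G v B ↔ x ∈ B ∧ G.Adj v x :=
  mem_filter

theorem nbrsIn_subset (G : SimpleGraph V) (v : V) (B : Finset V) : nbrsIn G v B ⊆ B :=
  filter_subset _ _

theorem nbrsIn_mono {v : V} {B C : Finset V} (h : B ⊆ C) : nbrsIn G v B ⊆ nbrsIn G v C :=
  filter_subset_filter _ h

theorem mem_coverIn {x : V} {A Q : Finset V} :
    x ∈ coverIn G A Q ↔ x ∈ Q ∧ ∃ a ∈ A, G.Adj a x := by
  simp only [coverIn, mem_biUnion, mem_nbrsIn]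
  tauto

theorem sub_le_cast_card_sdiff (S T : Finset V) : (#S : ℝ) - #T ≤ #(S \ T) :=
  sub_le_iff_le_add.2 <| mod_cast card_le_card_sdiff_add_card

namespace SparseTo

variable {γ γ' : ℝ} {A B C : Finset V}

theorem mono (h : SparseTo G γ A B) (hγ : γ ≤ γ') : SparseTo G γ' A B :=
  fun a ha => (h a ha).trans (by gcongr)

theorem subset_left (h : SparseTo G γ B C) (hAB : A ⊆ B) : SparseTo G γ A C :=
  fun a ha => h a (hAB ha)

theorem subset_right (h : SparseTo G γ A C) (hBC : B ⊆ C) (hcard : γ * #C ≤ γ' * #B) :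
    SparseTo G γ' A B := fun a ha =>
  calc (#(nbrsIn G a B) : ℝ) ≤ #(nbrsIn G a C) := mod_cast card_le_card (nbrsIn_mono hBC)
    _ ≤ γ * #C := h a ha
    _ ≤ γ' * #B := hcard

theorem exists_half_swap (h : SparseTo G γ B C) (hγ : 0 ≤ γ) :
    ∃ C' ⊆ C, (#C : ℝ) / 2 ≤ #C' ∧ SparseTo G (2 * γ) C' B := by
  set good : V → Prop := fun q => (#(nbrsIn G q B) : ℝ) ≤ 2 * γ * #B
  have hsplit : (#{q ∈ C | good q} : ℝ) + #{q ∈ C | ¬ good q} = #C :=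
    mod_cast card_filter_add_card_filter_not good
  refine ⟨{q ∈ C | good q}, filter_subset _ _, ?_, fun q hq => (mem_filter.1 hq).2⟩
  rcases eq_empty_or_nonempty {q ∈ C | ¬ good q} with hbad | hbad
  · rw [hbad, card_empty, Nat.cast_zero, add_zero] at hsplit
    linarith [(#C).cast_nonneg (α := ℝ)]
  have hcount : #{q ∈ C | ¬ good q} • (2 * γ * #B) < #B • (γ * #C) := by
    refine card_nsmul_lt_card_nsmul_of_lt_of_le G.Adj hbad
      (fun q hq => not_le.1 (mem_filter.1 hq).2) fun b hb => (h b hb).trans' ?_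
    refine mod_cast card_le_card fun q hq => ?_
    obtain ⟨hqC, hqb⟩ := (mem_bipartiteBelow G.Adj).1 hq
    exact mem_nbrsIn.2 ⟨(mem_filter.1 hqC).1, hqb.symm⟩
  have hpos : 0 < γ * #B * (#C - 2 * #{q ∈ C | ¬ good q}) := by
    simp only [nsmul_eq_mul] at hcount
    linarith
  linarith [pos_of_mul_pos_right hpos (by positivity)]

theorem edgeDensity_le [DecidableRel G.Adj] (h : SparseTo G γ A B) (hA : A.Nonempty)
    (hB : B.Nonempty) : (G.edgeDensity A B : ℝ) ≤ γ := by
  have hcard : #(G.interedges A B) = ∑ a ∈ A, #(nbrsIn G a B) := by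
    simp only [interedges_def, nbrsIn, card_filter, sum_product]
    congr!
  have hpos : (0 : ℝ) < #A * #B := mod_cast Nat.mul_pos hA.card_pos hB.card_pos
  rw [edgeDensity_def, hcard]
  push_cast
  rw [div_le_iff₀ hpos]
  calc ∑ a ∈ A, (#(nbrsIn G a B) : ℝ) ≤ ∑ _a ∈ A, γ * #B := sum_le_sum h
    _ = γ * (#A * #B) := by rw [sum_const, nsmul_eq_mul]; ring

theorem le_edgeDensity_of_compl [DecidableRel G.Adj] (h : SparseTo Gᶜ γ A B) (hAB : Disjoint A B)
    (hA : A.Nonempty) (hB : B.Nonempty) : 1 - γ ≤ (G.edgeDensity A B : ℝ) := by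
  have hadd : (G.edgeDensity A B : ℝ) + (Gᶜ.edgeDensity A B : ℝ) = 1 :=
    mod_cast G.edgeDensity_add_edgeDensity_compl hA hB hAB
  linarith [h.edgeDensity_le hA hB]

end SparseTo

/-! ### Greedy embedding -/

theorem exists_pairwise_disjoint_subsets_card_eq {k m : ℕ} {X : Finset V} (h : k * m ≤ #X) :
    ∃ W : Fin k → Finset V, Pairwise (Disjoint on W) ∧ ∀ i, W i ⊆ X ∧ #(W i) = m := by
  obtain ⟨e⟩ : Nonempty (Fin k × Fin m ↪ X) := Embedding.nonempty_of_card_le (by simpa using h)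
  refine ⟨fun i => univ.map ⟨fun j => (e (i, j) : V), fun j j' hj => by simpa using hj⟩, ?_,
    fun i => ⟨fun x hx => ?_, by simp⟩⟩
  · intro i i' hi
    simp only [onFun, Finset.disjoint_left, mem_map, mem_univ, true_and, not_exists]
    rintro _ ⟨j, rfl⟩ j' hj'
    exact hi (congrArg Prod.fst (e.injective (Subtype.ext hj'))).symm
  · obtain ⟨j, -, rfl⟩ := mem_map.1 hx
    exact (e (i, j)).2

theorem exists_forall_lt_card_nbrsIn {ι : Type*} [Fintype ι] {F : ι → SimpleGraph V} {s γ : ℝ}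
    {A : Finset V} {B : ι → Finset V} (hA : A.Nonempty) (hcard : Fintype.card ι * s ≤ #A)
    (h : ∀ i, ∀ A' ⊆ A, s ≤ #A' → ¬ SparseTo (F i) γ A' (B i)) :
    ∃ a ∈ A, ∀ i, γ * #(B i) < #(nbrsIn (F i) a (B i)) := by
  set bad : ι → Finset V := fun i => {a ∈ A | (#(nbrsIn (F i) a (B i)) : ℝ) ≤ γ * #(B i)}
  have hbad (i : ι) : (#(bad i) : ℝ) < s :=
    not_le.1 fun hs => h i _ (filter_subset _ _) hs fun a ha => (mem_filter.1 ha).2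
  have hunion : #(univ.biUnion bad) < #A := by
    rcases isEmpty_or_nonempty ι with hι | hι
    · simpa using hA.card_pos
    have : (#(univ.biUnion bad) : ℝ) < #A :=
      calc (#(univ.biUnion bad) : ℝ) ≤ ∑ i, (#(bad i) : ℝ) := mod_cast card_biUnion_le
        _ < ∑ _i : ι, s := sum_lt_sum_of_nonempty univ_nonempty fun i _ => hbad i
        _ = Fintype.card ι * s := by simp
        _ ≤ #A := hcard
    exact_mod_cast this
  obtain ⟨a, haA, ha⟩ := exists_mem_notMem_of_card_lt_card hunion
  refine ⟨a, haA, fun i => not_le.1 fun hle => ha ?_⟩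
  exact mem_biUnion.2 ⟨i, mem_univ i, mem_filter.2 ⟨haA, hle⟩⟩

theorem exists_embedding_cons {k : ℕ} {H : SimpleGraph (Fin (k + 1))}
    (f : H.comap Fin.succ ↪g G) {a : V}
    (ha : ∀ i : Fin k, (if H.Adj 0 i.succ then G else Gᶜ).Adj a (f i)) :
    ∃ g : H ↪g G, ∀ i, g i = (Fin.cons a f : Fin (k + 1) → V) i := by
  have hadj (i : Fin k) : G.Adj a (f i) ↔ H.Adj 0 i.succ := by
    have := ha i
    split_ifs at this with h
    · exact iff_of_true this h
    · exact iff_of_false ((G.compl_adj _ _).1 this).2 h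
  have hne (i : Fin k) : a ≠ f i := (ha i).ne
  refine ⟨⟨⟨Fin.cons a f, Fin.cons_injective_iff.2 ⟨?_, f.injective⟩⟩, ?_⟩, fun _ => rfl⟩
  · rintro ⟨i, hi⟩
    exact hne i hi.symm
  · intro i j
    cases i using Fin.cases <;> cases j using Fin.cases <;>
      simp [hadj, G.adj_comm _ a, H.adj_comm _ 0]

theorem exists_embedding_of_forall_not_sparseTo {s γ : ℝ} (hs : 0 < s) (hγ₀ : 0 < γ) (hγ₁ : γ ≤ 1) :
    ∀ {k : ℕ} (H : SimpleGraph (Fin k)) {W : Fin k → Finset V},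
      (∀ i, k * s ≤ γ ^ k * #(W i)) →
      (∀ i j, i ≠ j → ∀ A ⊆ W i, ∀ B ⊆ W j, s ≤ #A → s ≤ #B →
        ¬ SparseTo G γ A B ∧ ¬ SparseTo Gᶜ γ A B) →
      ∃ f : H ↪g G, ∀ i, f i ∈ W i
  | 0, _, _, _, _ => ⟨⟨⟨finZeroElim, finZeroElim⟩, fun {i} => i.elim0⟩, finZeroElim⟩
  | k + 1, H, W, hcard, hW => by
    set F : Fin k → SimpleGraph V := fun i => if H.Adj 0 i.succ then G else Gᶜ
    have hW_large (i : Fin (k + 1)) : (k + 1) * s ≤ #(W i) :=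
      calc (k + 1) * s ≤ γ ^ (k + 1) * #(W i) := mod_cast hcard i
        _ ≤ #(W i) := mul_le_of_le_one_left (by positivity) (pow_le_one₀ hγ₀.le hγ₁)
    have hks : 0 ≤ k * s := by positivity
    obtain ⟨a, haW, ha⟩ := exists_forall_lt_card_nbrsIn (F := F) (γ := γ) (s := s) (A := W 0)
      (B := fun i => W i.succ)
      (card_pos.1 <| by exact_mod_cast (by linarith [hW_large 0] : (0 : ℝ) < #(W 0)))
      (by rw [Fintype.card_fin]; linarith [hW_large 0])
      fun i A hA hsA => by
        have := hW 0 i.succ i.succ_ne_zero.symm A hA _ subset_rfl hsA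
          (by linarith [hW_large i.succ])
        dsimp only [F]
        split_ifs
        exacts [this.1, this.2]
    have hcard' (i : Fin k) : k * s ≤ γ ^ k * #(nbrsIn (F i) a (W i.succ)) :=
      calc k * s ≤ (k + 1 : ℕ) * s := by gcongr; omega
        _ ≤ γ ^ (k + 1) * #(W i.succ) := hcard i.succ
        _ = γ ^ k * (γ * #(W i.succ)) := by ring
        _ ≤ γ ^ k * #(nbrsIn (F i) a (W i.succ)) := by gcongr; exact (ha i).le
    obtain ⟨f, hf⟩ := exists_embedding_of_forall_not_sparseTo hs hγ₀ hγ₁ (H.comap Fin.succ) hcard'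
      fun i j hij A hA B hB => hW i.succ j.succ (Fin.succ_injective _ |>.ne hij)
        A (hA.trans (nbrsIn_subset _ _ _)) B (hB.trans (nbrsIn_subset _ _ _))
    obtain ⟨g, hg⟩ := exists_embedding_cons f fun i => (mem_nbrsIn.1 (hf i)).2
    refine ⟨g, Fin.cases ?_ fun i => ?_⟩
    · simpa [hg] using haW
    · simpa [hg] using nbrsIn_subset _ _ _ (hf i)

theorem exists_sparse_pair {k : ℕ} (hk : 0 < k) (H : SimpleGraph (Fin k)) {γ : ℝ} (hγ₀ : 0 < γ)
    (hγ₁ : γ ≤ 1) :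
    ∃ δ : ℝ, 0 < δ ∧ δ ≤ 1 ∧ ∀ {V : Type u} {G : SimpleGraph V}, ¬ H ⊴ G →
      ∀ X : Finset V, k ≤ #X → ∃ A ⊆ X, ∃ B ⊆ X, Disjoint A B ∧ δ * #X ≤ #A ∧ δ * #X ≤ #B ∧
        ∃ F, (F = G ∨ F = Gᶜ) ∧ SparseTo F γ A B := by
  have hk₁ : (1 : ℝ) ≤ k := mod_cast hk
  refine ⟨γ ^ k / (2 * k ^ 2), by positivity, ?_, fun {V G} hG X hX => ?_⟩
  · rw [div_le_one (by positivity)]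
    nlinarith [pow_le_one₀ hγ₀.le hγ₁ (n := k)]
  by_contra! hno
  set m := #X / k
  have hkm : k * m ≤ #X := Nat.mul_div_le _ _
  have hXm : (#X : ℝ) ≤ 2 * k * m := by
    have hm : 1 ≤ m := Nat.div_pos hX hk
    have : #X < k * m + k := Nat.lt_mul_div_succ _ hk |>.trans_eq (by ring)
    exact_mod_cast (by nlinarith : #X ≤ 2 * k * m)
  have hXpos : (0 : ℝ) < #X := mod_cast hk.trans_le hX
  obtain ⟨W, hWdisj, hW⟩ := exists_pairwise_disjoint_subsets_card_eq hkm
  obtain ⟨f, -⟩ := exists_embedding_of_forall_not_sparseTo (G := G)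
    (s := γ ^ k / (2 * k ^ 2) * #X) (by positivity) hγ₀ hγ₁ H (W := W)
    (fun i => by
      rw [(hW i).2]
      calc k * (γ ^ k / (2 * k ^ 2) * #X) = γ ^ k * (#X / (2 * k)) := by field_simp
        _ ≤ γ ^ k * m := by gcongr; exact (div_le_iff₀' (by positivity)).2 hXm)
    fun i j hij A hA B hB hsA hsB => by
      have := hno A (hA.trans (hW i).1) B (hB.trans (hW j).1) ((hWdisj hij).mono hA hB) hsA hsB
      exact ⟨this G (.inl rfl), this Gᶜ (.inr rfl)⟩
  exact hG ⟨f⟩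

theorem exists_sparse_triple {k : ℕ} (hk : 0 < k) (H : SimpleGraph (Fin k)) {γ : ℝ} (hγ₀ : 0 < γ)
    (hγ₁ : γ ≤ 1) :
    ∃ δ : ℝ, 0 < δ ∧ δ ≤ 1 ∧ ∀ {V : Type u} {G : SimpleGraph V}, ¬ H ⊴ G →
      ∀ X : Finset V, k ≤ δ * #X → ∃ P B C : Finset V,
        Disjoint P B ∧ Disjoint P C ∧ Disjoint B C ∧
        δ * #X ≤ #P ∧ δ * #X ≤ #B ∧ δ * #X ≤ #C ∧
        ∃ F, (F = G ∨ F = Gᶜ) ∧ SparseTo F γ P B ∧ SparseTo F γ P C ∧ SparseTo F γ B C := by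
  obtain ⟨δ, hδ₀, hδ₁, hpair⟩ := exists_sparse_pair hk H hγ₀ hγ₁
  refine ⟨δ ^ 3, by positivity, pow_le_one₀ hδ₀.le hδ₁, fun {V G} hG X hX => ?_⟩
  have hshrink (x : ℝ) (hx : 0 ≤ x) : δ * x ≤ x := mul_le_of_le_one_left hx hδ₁
  have hX₁ : δ ^ 3 * #X ≤ δ ^ 2 * #X := by linarith [hshrink (δ ^ 2 * #X) (by positivity)]
  have hX₂ : δ ^ 2 * #X ≤ δ * #X := by linarith [hshrink (δ * #X) (by positivity)]
  have hX₃ : δ * #X ≤ #X := hshrink _ (by positivity)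
  obtain ⟨A₀, -, B₀, -, d₀, hA₀, hB₀, F₀, hF₀, h₀⟩ :=
    hpair hG X (by exact_mod_cast (by linarith : (k : ℝ) ≤ #X))
  obtain ⟨A₁, hA₁₀, B₁, hB₁₀, d₁, hA₁, hB₁, F₁, hF₁, h₁⟩ :=
    hpair hG A₀ (by exact_mod_cast (by linarith : (k : ℝ) ≤ #A₀))
  have hA₀' : δ ^ 2 * #X ≤ δ * #A₀ := by nlinarith
  obtain ⟨A₂, hA₂₁, B₂, hB₂₁, d₂, hA₂, hB₂, F₂, hF₂, h₂⟩ :=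
    hpair hG A₁ (by exact_mod_cast (by linarith : (k : ℝ) ≤ #A₁))
  have hA₁' : δ ^ 3 * #X ≤ δ * #A₁ := by nlinarith
  have hA₂₀ := hA₂₁.trans hA₁₀
  have hB₂₀ := hB₂₁.trans hA₁₀
  have hsame : F₁ = F₀ ∨ F₂ = F₀ ∨ F₂ = F₁ := by
    rcases hF₀ with rfl | rfl <;> rcases hF₁ with rfl | rfl <;> rcases hF₂ with rfl | rfl <;> simp
  rcases hsame with rfl | rfl | rfl
  · exact ⟨A₂, B₁, B₀, d₁.mono_left hA₂₁, d₀.mono_left hA₂₀, d₀.mono_left hB₁₀, by linarith,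
      by linarith, by linarith, F₁, hF₁, h₁.subset_left hA₂₁, h₀.subset_left hA₂₀,
      h₀.subset_left hB₁₀⟩
  · exact ⟨A₂, B₂, B₀, d₂, d₀.mono_left hA₂₀, d₀.mono_left hB₂₀, by linarith, by linarith,
      by linarith, F₂, hF₂, h₂, h₀.subset_left hA₂₀, h₀.subset_left hB₂₀⟩
  · exact ⟨A₂, B₂, B₁, d₂, d₁.mono_left hA₂₁, d₁.mono_left hB₂₁, by linarith, by linarith,
      by linarith, F₂, hF₂, h₂, h₁.subset_left hA₂₁, h₁.subset_left hB₂₁⟩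

/-! ### Consequences of having no sparse pair -/

theorem exists_minimal_coverIn {η τ : ℝ} (hη : 0 ≤ η) (hτ : 0 ≤ τ) {M Q₁ Q₂ : Finset V}
    (h₁ : SparseTo G η M Q₁) (h₂ : SparseTo G η M Q₂) (hM : τ * #Q₁ ≤ #(coverIn G M Q₁)) :
    ∃ A ⊆ M, (τ * #Q₁ ≤ #(coverIn G A Q₁) ∨ τ * #Q₂ ≤ #(coverIn G A Q₂)) ∧
      (#(coverIn G A Q₁) : ℝ) ≤ (τ + η) * #Q₁ ∧ (#(coverIn G A Q₂) : ℝ) ≤ (τ + η) * #Q₂ := by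
  obtain ⟨A, hAM, hA⟩ := exists_minimal_le_of_wellFoundedLT
    (fun A => τ * #Q₁ ≤ #(coverIn G A Q₁) ∨ τ * #Q₂ ≤ #(coverIn G A Q₂)) M (.inl hM)
  refine ⟨A, hAM, hA.prop, ?_⟩
  rcases A.eq_empty_or_nonempty with rfl | ⟨a, ha⟩
  · simp only [coverIn, biUnion_empty, card_empty, Nat.cast_zero]
    exact ⟨by positivity, by positivity⟩
  have hcover (Q : Finset V) :
      (#(coverIn G A Q) : ℝ) ≤ #(nbrsIn G a Q) + #(coverIn G (A.erase a) Q) := by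
    nth_rw 1 [← insert_erase ha]
    rw [coverIn, biUnion_insert]
    exact_mod_cast card_union_le _ _
  have hlt := hA.not_prop_of_lt (erase_ssubset ha)
  push Not at hlt
  constructor
  · linarith [hcover Q₁, h₁ a (hAM ha), hlt.1]
  · linarith [hcover Q₂, h₂ a (hAM ha), hlt.2]

namespace NoSparsePair

variable {c β : ℝ} {A B : Finset V}

theorem exists_lt_card_nbrsIn (hE : NoSparsePair G c β) (hAB : Disjoint A B) (hA : c * β ≤ #A)
    (hB : β ≤ #B) : ∃ a ∈ A, c * #B < #(nbrsIn G a B) := by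
  have := hE hAB hA hB
  simpa only [SparseTo, not_forall, not_le, exists_prop] using this

theorem exists_le_card_nbrsIn (hE : NoSparsePair G c β) (hc : 0 ≤ c) (hAB : Disjoint A B)
    (hA : c * β ≤ #A) (hB : β ≤ #B) : ∃ a ∈ A, c * β ≤ #(nbrsIn G a B) := by
  obtain ⟨a, ha, hlt⟩ := hE.exists_lt_card_nbrsIn hAB hA hB
  exact ⟨a, ha, hlt.le.trans' (by gcongr)⟩

theorem exists_adj (hE : NoSparsePair G c β) (hc : 0 ≤ c) (hAB : Disjoint A B) (hA : c * β ≤ #A)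
    (hB : β ≤ #B) : ∃ a ∈ A, ∃ b ∈ B, G.Adj a b := by
  obtain ⟨a, ha, hlt⟩ := hE.exists_lt_card_nbrsIn hAB hA hB
  have hpos : (0 : ℝ) < #(nbrsIn G a B) := hlt.trans_le' (by positivity)
  obtain ⟨b, hb⟩ := card_pos.1 (mod_cast hpos)
  exact ⟨a, ha, b, mem_nbrsIn.1 hb⟩

theorem card_sdiff_coverIn_lt (hE : NoSparsePair G c β) (hc : 0 ≤ c) (hAB : Disjoint A B)
    (hA : c * β ≤ #A) : (#(B \ coverIn G A B) : ℝ) < β := by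
  by_contra! hB
  obtain ⟨a, ha, b, hb, hab⟩ := hE.exists_adj hc (hAB.mono_right sdiff_subset) hA hB
  obtain ⟨hbB, hb⟩ := mem_sdiff.1 hb
  exact hb (mem_coverIn.2 ⟨hbB, a, ha, hab⟩)

theorem exists_le_card_nbrsIn_self (hE : NoSparsePair G c β) (hc₀ : 0 ≤ c) (hc₁ : c ≤ 1)
    (hcβ : 1 ≤ c * β) {P : Finset V} (hP : 3 * β ≤ #P) : ∃ v ∈ P, c * β ≤ #(nbrsIn G v P) := by
  have hβ : c * β ≤ β := mul_le_of_le_one_left (by nlinarith) hc₁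
  have hceil : (⌈c * β⌉₊ : ℝ) < c * β + 1 := Nat.ceil_lt_add_one (by linarith)
  obtain ⟨P₁, hP₁, hcard⟩ := exists_subset_card_eq (s := P) (n := ⌈c * β⌉₊)
    (by exact_mod_cast (by linarith : (⌈c * β⌉₊ : ℝ) ≤ #P))
  have hrest : β ≤ #(P \ P₁) := by
    have := sub_le_cast_card_sdiff P P₁
    rw [hcard] at this
    linarith
  obtain ⟨v, hv, hlarge⟩ := hE.exists_le_card_nbrsIn hc₀ disjoint_sdiff
    (hcard ▸ Nat.le_ceil (c * β)) hrest
  exact ⟨v, hP₁ hv, hlarge.trans (mod_cast card_le_card (nbrsIn_mono sdiff_subset))⟩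

end NoSparsePair

end

/-! ### `C₅`-free graphs -/

section

open Finset

variable {V : Type} {G : SimpleGraph V}

namespace C5Free

theorem false_of_adj (hG : C5Free G) {a b c d e : V} (hab : G.Adj a b) (hbc : G.Adj b c)
    (hcd : G.Adj c d) (hde : G.Adj d e) (hea : G.Adj e a) (hac : ¬ G.Adj a c) (had : ¬ G.Adj a d)
    (hbd : ¬ G.Adj b d) (hbe : ¬ G.Adj b e) (hce : ¬ G.Adj c e) : False := by
  set f : Fin 5 → V := ![a, b, c, d, e]
  have hadj (i j : Fin 5) : G.Adj (f i) (f j) ↔ (cycleGraph 5).Adj i j := by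
    have hea' := hea.symm
    fin_cases i <;> fin_cases j <;>
      first
      | exact iff_of_true (by simp [f, G.adj_comm, *]) (by decide)
      | exact iff_of_false (by simp [f, G.adj_comm, *]) (by decide)
  have htwinfree : ∀ i j : Fin 5,
      (∀ l, (cycleGraph 5).Adj i l ↔ (cycleGraph 5).Adj j l) → i = j := by decide
  refine hG ⟨⟨⟨f, fun i j hij => htwinfree i j fun l => ?_⟩, hadj _ _⟩⟩
  rw [← hadj, ← hadj, hij]

theorem compl (hG : C5Free G) : C5Free Gᶜ := by
  have hself : (cycleGraph 5 : SimpleGraph (Fin 5)) ⊴ (cycleGraph 5)ᶜ :=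
    ⟨⟨⟨fun i => 2 * i, by decide⟩, by decide⟩⟩
  rintro ⟨f⟩
  have hcompl : (cycleGraph 5)ᶜ ⊴ G := ⟨by simpa using Embedding.complEquiv f⟩
  exact hG (hself.trans hcompl)

variable {c β : ℝ} {A W R D : Finset V} {v s : V}

theorem card_lt_of_covered_nonadj (hG : C5Free G) (hE : NoSparsePair G c β) (hc : 0 ≤ c)
    (hvs : G.Adj v s) (hvA : ∀ a ∈ A, G.Adj v a) (hWD : Disjoint W D) (hWcard : c * β ≤ #W)
    (hW : ∀ w ∈ W, G.Adj s w ∧ ¬ G.Adj v w ∧ ∀ a ∈ A, ¬ G.Adj a w)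
    (hD : ∀ d ∈ D, ¬ G.Adj v d ∧ ¬ G.Adj s d ∧ ∃ a ∈ A, G.Adj a d ∧ ¬ G.Adj s a) :
    (#D : ℝ) < β := by
  by_contra! hDcard
  obtain ⟨w, hw, d, hd, hwd⟩ := hE.exists_adj hc hWD hWcard hDcard
  obtain ⟨hsw, hvw, hAw⟩ := hW w hw
  obtain ⟨hvd, hsd, a, ha, had, hsa⟩ := hD d hd
  exact hG.false_of_adj (hvA a ha) had hwd.symm hsw.symm hvs.symm hvd hvw (hAw a ha)
    (mt Adj.symm hsa) (mt Adj.symm hsd)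

theorem card_lt_of_covered_adj (hG : C5Free G) (hE : NoSparsePair G c β) (hc : 0 ≤ c) {t : ℝ}
    (hRD : Disjoint R D) (hWcard : c * β ≤ #W) (hRcard : β ≤ #R)
    (hW : ∀ w ∈ W, G.Adj s w ∧ ∀ a ∈ A, ¬ G.Adj a w)
    (hR : ∀ x ∈ R, ¬ G.Adj s x ∧ ∀ a ∈ A, ¬ G.Adj a x)
    (hD : ∀ d ∈ D, ¬ G.Adj s d ∧ ∃ a ∈ A, G.Adj a d ∧ G.Adj s a)
    (hWD : ∀ w ∈ W, (#(nbrsIn G w D) : ℝ) ≤ t) : (#D : ℝ) < β + t := by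
  by_contra! hDcard
  have hWR : Disjoint W R :=
    Finset.disjoint_left.2 fun x hxW hxR => (hR x hxR).1 (hW x hxW).1
  obtain ⟨w, hw, hwR⟩ := hE.exists_le_card_nbrsIn hc hWR hWcard hRcard
  obtain ⟨hsw, hAw⟩ := hW w hw
  have hDw : β ≤ #(D \ nbrsIn G w D) := by
    linarith [sub_le_cast_card_sdiff D (nbrsIn G w D), hWD w hw]
  obtain ⟨x, hx, d, hd, hxd⟩ :=
    hE.exists_adj hc (hRD.mono (nbrsIn_subset _ _ _) sdiff_subset) hwR hDw
  obtain ⟨hxR, hwx⟩ := mem_nbrsIn.1 hx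
  obtain ⟨hdD, hwd⟩ := mem_sdiff.1 hd
  obtain ⟨hsx, hAx⟩ := hR x hxR
  obtain ⟨hsd, a, ha, had, hsa⟩ := hD d hdD
  exact hG.false_of_adj hwx.symm hsw.symm hsa had hxd.symm (mt Adj.symm hsx)
    (mt Adj.symm (hAx a ha)) (mt Adj.symm (hAw a ha)) (fun h => hwd (mem_nbrsIn.2 ⟨hdD, h⟩)) hsd

theorem card_lt_of_covered (hG : C5Free G) (hE : NoSparsePair G c β) (hc : 0 ≤ c) {t : ℝ}
    (hvs : G.Adj v s) (hvA : ∀ a ∈ A, G.Adj v a) (hWD : Disjoint W D) (hRD : Disjoint R D)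
    (hWcard : c * β ≤ #W) (hRcard : β ≤ #R)
    (hW : ∀ w ∈ W, G.Adj s w ∧ ¬ G.Adj v w ∧ ∀ a ∈ A, ¬ G.Adj a w)
    (hR : ∀ x ∈ R, ¬ G.Adj s x ∧ ∀ a ∈ A, ¬ G.Adj a x)
    (hD : ∀ d ∈ D, ¬ G.Adj v d ∧ ¬ G.Adj s d ∧ ∃ a ∈ A, G.Adj a d)
    (ht : ∀ w ∈ W, (#(nbrsIn G w D) : ℝ) ≤ t) : (#D : ℝ) < 2 * β + t := by
  set far := {d ∈ D | ∃ a ∈ A, G.Adj a d ∧ ¬ G.Adj s a}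
  set near := {d ∈ D | ∃ a ∈ A, G.Adj a d ∧ G.Adj s a}
  have hfarD : far ⊆ D := filter_subset _ _
  have hnearD : near ⊆ D := filter_subset _ _
  have hfar : (#far : ℝ) < β :=
    hG.card_lt_of_covered_nonadj hE hc hvs hvA (hWD.mono_right hfarD) hWcard hW fun d hd =>
      ⟨(hD d (hfarD hd)).1, (hD d (hfarD hd)).2.1, (mem_filter.1 hd).2⟩
  have hnear : (#near : ℝ) < β + t :=
    hG.card_lt_of_covered_adj hE hc (hRD.mono_right hnearD) hWcard hRcard
      (fun w hw => ⟨(hW w hw).1, (hW w hw).2.2⟩) hR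
      (fun d hd => ⟨(hD d (hnearD hd)).2.1, (mem_filter.1 hd).2⟩)
      fun w hw => (ht w hw).trans' (mod_cast card_le_card (nbrsIn_mono hnearD))
  have hsub : D ⊆ far ∪ near := fun d hd => by
    obtain ⟨-, -, a, ha, had⟩ := hD d hd
    rw [mem_union, mem_filter, mem_filter]
    by_cases hsa : G.Adj s a
    exacts [.inr ⟨hd, a, ha, had, hsa⟩, .inl ⟨hd, a, ha, had, hsa⟩]
  have hsplit : (#D : ℝ) ≤ #far + #near :=
    mod_cast (card_le_card hsub).trans (card_union_le _ _)
  linarith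

theorem false_of_coverIn (hG : C5Free G) (hE : NoSparsePair G c β) (hc : 0 ≤ c)
    {M Q₁ Q₂ : Finset V} (hQ : Disjoint Q₁ Q₂) (hMQ : Disjoint M Q₂)
    (hvM : ∀ a ∈ M, G.Adj v a) (hAM : A ⊆ M) (hM : c * β ≤ #M)
    (h₁ : SparseTo G (1 / 32) (insert v M) Q₁) (h₂ : SparseTo G (1 / 32) (insert v M) Q₂)
    (h₂₁ : SparseTo G (1 / 32) Q₂ Q₁) (hQ₁ : 16 * β ≤ #Q₁) (hQ₂ : 16 * β ≤ #Q₂)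
    (hcover₁ : 1 / 4 * (#Q₁ : ℝ) ≤ #(coverIn G A Q₁))
    (hcover₂ : (#(coverIn G A Q₂) : ℝ) ≤ 1 / 2 * #Q₂) : False := by
  set U := Q₂ \ coverIn G A Q₂
  have hUQ : U ⊆ Q₂ := sdiff_subset
  set R : V → Finset V := fun y => U \ nbrsIn G y Q₂
  have hRU (y : V) : R y ⊆ U := sdiff_subset
  have hRcard : ∀ y ∈ insert v M, β ≤ #(R y) := fun y hy => by
    linarith [sub_le_cast_card_sdiff Q₂ (coverIn G A Q₂),
      sub_le_cast_card_sdiff U (nbrsIn G y Q₂), h₂ y hy]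
  have hR : ∀ y, ∀ x ∈ R y, ¬ G.Adj y x ∧ ∀ a ∈ A, ¬ G.Adj a x := fun y x hx => by
    simp only [R, U, mem_sdiff, mem_coverIn, mem_nbrsIn] at hx
    exact ⟨fun h => hx.2 ⟨hx.1.1, h⟩, fun a ha h => hx.1.2 ⟨hx.1.1, a, ha, h⟩⟩
  have hv := mem_insert_self v M
  obtain ⟨s, hs, hWcard⟩ :=
    hE.exists_le_card_nbrsIn hc (hMQ.mono_right ((hRU v).trans hUQ)) hM (hRcard v hv)
  have hsM : s ∈ insert v M := mem_insert_of_mem hs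
  set W := nbrsIn G s (R v)
  have hWR : W ⊆ R v := nbrsIn_subset _ _ _
  have hWQ : W ⊆ Q₂ := hWR.trans ((hRU v).trans hUQ)
  set D := (coverIn G A Q₁ \ nbrsIn G v Q₁) \ nbrsIn G s Q₁
  have hDQ : D ⊆ Q₁ := fun d hd =>
    (mem_coverIn.1 (mem_sdiff.1 (mem_sdiff.1 hd).1).1).1
  have hD : ∀ d ∈ D, ¬ G.Adj v d ∧ ¬ G.Adj s d ∧ ∃ a ∈ A, G.Adj a d := fun d hd => by
    simp only [D, mem_sdiff, mem_coverIn, mem_nbrsIn] at hd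
    tauto
  have hDcard : (#D : ℝ) < 2 * β + 1 / 32 * #Q₁ :=
    hG.card_lt_of_covered hE hc (hvM s hs) (fun a ha => hvM a (hAM ha)) (hQ.symm.mono hWQ hDQ)
      (hQ.symm.mono ((hRU s).trans hUQ) hDQ) hWcard (hRcard s hsM)
      (fun w hw => ⟨(mem_nbrsIn.1 hw).2, hR v w (hWR hw)⟩) (hR s) hD
      fun w hw => (h₂₁ w (hWQ hw)).trans' (mod_cast card_le_card (nbrsIn_mono hDQ))
  linarith [sub_le_cast_card_sdiff (coverIn G A Q₁) (nbrsIn G v Q₁),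
    sub_le_cast_card_sdiff (coverIn G A Q₁ \ nbrsIn G v Q₁) (nbrsIn G s Q₁), h₁ v hv, h₁ s hsM,
    (#Q₁).cast_nonneg (α := ℝ)]

theorem false_of_sparse_triple (hG : C5Free G) (hE : NoSparsePair G c β) (hc₀ : 0 ≤ c)
    (hc₁ : c ≤ 1) (hcβ : 1 ≤ c * β) {P B C : Finset V} (hPB : Disjoint P B) (hPC : Disjoint P C)
    (hBC : Disjoint B C) (hP : 32 * β ≤ #P) (hB : 32 * β ≤ #B) (hC : 32 * β ≤ #C)
    (hspPB : SparseTo G (1 / 64) P B) (hspPC : SparseTo G (1 / 64) P C)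
    (hspBC : SparseTo G (1 / 64) B C) : False := by
  have hβ : 0 < β := pos_of_mul_pos_right (by linarith) hc₀
  obtain ⟨C', hC'C, hC', hspCB⟩ := hspBC.exists_half_swap (by norm_num)
  have hspCB' : SparseTo G (1 / 32) C' B := hspCB.mono (by norm_num)
  have hspPB' : SparseTo G (1 / 32) P B := hspPB.mono (by norm_num)
  have hspPC' : SparseTo G (1 / 32) P C' := hspPC.subset_right hC'C (by linarith)
  have hspBC' : SparseTo G (1 / 32) B C' := hspBC.subset_right hC'C (by linarith)
  have hPC' := hPC.mono_right hC'C
  have hBC' := hBC.mono_right hC'C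
  obtain ⟨v, hv, hM⟩ := hE.exists_le_card_nbrsIn_self hc₀ hc₁ hcβ (P := P) (by linarith)
  set M := nbrsIn G v P
  have hMP : M ⊆ P := nbrsIn_subset _ _ _
  have hvMP : insert v M ⊆ P := insert_subset hv hMP
  have hvM : ∀ a ∈ M, G.Adj v a := fun a ha => (mem_nbrsIn.1 ha).2
  have hcover : 1 / 4 * (#B : ℝ) ≤ #(coverIn G M B) := by
    linarith [hE.card_sdiff_coverIn_lt hc₀ (hPB.mono_left hMP) hM,
      sub_le_cast_card_sdiff B (coverIn G M B)]
  obtain ⟨A, hAM, hor, hB₂, hC₂⟩ := exists_minimal_coverIn (by norm_num) (by norm_num)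
    (hspPB'.subset_left hMP) (hspPC'.subset_left hMP) hcover
  rcases hor with hB₁ | hC₁
  · exact hG.false_of_coverIn hE hc₀ hBC' (hPC'.mono_left hMP) hvM hAM hM
      (hspPB'.subset_left hvMP) (hspPC'.subset_left hvMP) hspCB' (by linarith) (by linarith) hB₁
      (by linarith)
  · exact hG.false_of_coverIn hE hc₀ hBC'.symm (hPB.mono_left hMP) hvM hAM hM
      (hspPC'.subset_left hvMP) (hspPB'.subset_left hvMP) hspBC' (by linarith) (by linarith) hC₁
      (by linarith)

end C5Free

theorem exists_sparseTo_zero_singleton [Fintype V] [Nontrivial V] (G : SimpleGraph V) (v : V) :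
    ∃ B : Finset V, v ∉ B ∧ Fintype.card V ≤ 4 * #B ∧
      (SparseTo G 0 {v} B ∨ SparseTo Gᶜ 0 {v} B) := by
  have hcard : 1 < Fintype.card V := Fintype.one_lt_card
  have hcompl : #(Gᶜ.neighborFinset v) = Fintype.card V - 1 - #(G.neighborFinset v) := by
    simp only [card_neighborFinset_eq_degree, degree_compl]
  by_cases h : Fintype.card V ≤ 4 * #(G.neighborFinset v)
  · refine ⟨G.neighborFinset v, by simp, h, .inr ?_⟩
    simp +contextual [SparseTo, nbrsIn, filter_eq_empty_iff]
  · refine ⟨Gᶜ.neighborFinset v, by simp, by omega, .inl ?_⟩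
    simp +contextual [SparseTo, nbrsIn, filter_eq_empty_iff]

theorem c5_free_density_theorem_general :
    ∃ ε : ℝ, 0 < ε ∧ ∀ c : ℝ, 0 ≤ c → c ≤ 1 →
      ∀ (V : Type) [Fintype V] [Nontrivial V] (G : SimpleGraph V), C5Free G →
        ∃ A B : Finset V, Disjoint A B ∧ A.Nonempty ∧ B.Nonempty ∧
          ε * c * Fintype.card V ≤ #A ∧ ε * Fintype.card V ≤ #B ∧
          (SparseTo G c A B ∨ SparseTo Gᶜ c A B) := by
  obtain ⟨δ, hδ₀, hδ₁, htriple⟩ :=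
    exists_sparse_triple (by norm_num) (cycleGraph 5) (γ := 1 / 64) (by norm_num) (by norm_num)
  refine ⟨δ / 32, by positivity, fun c hc₀ hc₁ V _ _ G hG => ?_⟩
  set β := δ / 32 * Fintype.card V
  have hβ : 32 * β = δ * Fintype.card V := by ring
  rw [show δ / 32 * c * Fintype.card V = c * β by ring]
  rcases le_or_gt (c * β) 1 with hcβ | hcβ
  · obtain ⟨v⟩ := ‹Nontrivial V›.to_nonempty
    obtain ⟨B, hvB, hB, hsparse⟩ := exists_sparseTo_zero_singleton G v
    have hn : δ * Fintype.card V ≤ Fintype.card V := mul_le_of_le_one_left (by positivity) hδ₁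
    have hB' : (Fintype.card V : ℝ) ≤ 4 * #B := mod_cast hB
    exact ⟨{v}, B, by simpa, by simp, card_pos.1 (by have := Fintype.card_pos (α := V); omega),
      by simpa, by linarith, hsparse.imp (·.mono hc₀) (·.mono hc₀)⟩
  by_contra! hno
  have hββ : c * β ≤ β := mul_le_of_le_one_left (by positivity) hc₁
  have hnonempty {S : Finset V} (hS : c * β ≤ #S) : S.Nonempty :=
    card_pos.1 (by exact_mod_cast (by linarith : (0 : ℝ) < #S))
  have hE {A B : Finset V} (hAB : Disjoint A B) (hA : c * β ≤ #A) (hB : β ≤ #B) :=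
    hno A B hAB (hnonempty hA) (hnonempty (hββ.trans hB)) hA hB
  obtain ⟨P, B, C, hPB, hPC, hBC, hP, hB, hC, F, hF, hspPB, hspPC, hspBC⟩ :=
    htriple hG univ (by rw [card_univ]; push_cast; linarith)
  rw [card_univ, ← hβ] at hP hB hC
  have hFree : C5Free F ∧ NoSparsePair F c β := by
    rcases hF with rfl | rfl
    exacts [⟨hG, fun _ _ hAB hA hB => (hE hAB hA hB).1⟩,
      ⟨hG.compl, fun _ _ hAB hA hB => (hE hAB hA hB).2⟩]
  exact hFree.1.false_of_sparse_triple hFree.2 hc₀ hc₁ hcβ.le hPB hPC hBC hP hB hC hspPB hspPC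
    hspBC

end

/-- There exists `ε > 0` such that for every `0 ≤ c ≤ 1/2` and every `C₅`-free graph `G`
on `n > 1` vertices there are disjoint nonempty `A, B ⊆ V(G)` with `|A| ≥ εcn`, `|B| ≥ εn`
whose edge-density is at most `c` or at least `1 - c`. -/
theorem c5_free_density_theorem :
    ∃ ε : ℝ, 0 < ε ∧
      ∀ (c : ℝ), 0 ≤ c → c ≤ 1 / 2 →
        ∀ (n : ℕ) (G : SimpleGraph (Fin n)), 1 < n → C5Free G →
          ∃ A B : Finset (Fin n), Disjoint A B ∧ A.Nonempty ∧ B.Nonempty ∧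
            ε * c * n ≤ (A.card : ℝ) ∧ ε * n ≤ (B.card : ℝ) ∧
            ((G.edgeDensity A B : ℝ) ≤ c ∨ 1 - c ≤ (G.edgeDensity A B : ℝ)) := by
  obtain ⟨ε, hε, h⟩ := c5_free_density_theorem_general
  refine ⟨ε, hε, fun c hc₀ hc₁ n G hn hG => ?_⟩
  have : Nontrivial (Fin n) := Fin.nontrivial_iff_two_le.2 hn
  obtain ⟨A, B, hAB, hA, hB, hcardA, hcardB, hsparse⟩ := h c hc₀ (by linarith) (Fin n) G hG
  rw [Fintype.card_fin] at hcardA hcardB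
  exact ⟨A, B, hAB, hA, hB, hcardA, hcardB,
    hsparse.imp (·.edgeDensity_le hA hB) (·.le_edgeDensity_of_compl hAB hA hB)⟩
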